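/- Let n ≥ 1 and let a x : Fin n → ℝ satisfy |a j * x i| < 1 for all i, j. Then the family indexed by strictly decreasing tuples k : Fin n → ℕ with every value k l ≥ 1, with term (-1)^n · (∏_{l} (1 / (k l : ℝ))) · D(a, k) · D(x, k), has sum equal to the determinant of the n×n matrix with (i,j) entry Real.log (1 - a j * x i). (Determinant form of the logarithm example, from Theorem 1 with g(x) = ln(1−x), whose k-th Maclaurin coefficient is −1/k for k ≥ 1 and 0 for k = 0.) -/

import Mathlib

/-- The product of finitely many convergent real series, as a series over tuples of indices. -/
theorem hasSum_prod_pi_real {n : ℕ} {β : Type*} {f : Fin n → β → ℝ} {s : Fin n → ℝ}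
    (hf : ∀ i, HasSum (f i) (s i)) :
    HasSum (fun k : Fin n → β => ∏ i, f i (k i)) (∏ i, s i) := by
  induction n with
  | zero => simp
  | succ n ih =>
    have htail := ih (fun i => hf i.succ)
    have hsummable := summable_mul_of_summable_norm (hf 0).summable.norm htail.summable.norm
    have hmul := (hf 0).mul htail hsummable
    rw [Fin.prod_univ_succ, ← (Fin.consEquiv fun _ : Fin (n + 1) => β).hasSum_iff]
    refine hmul.congr_fun fun p => ?_
    simp [Fin.prod_univ_succ, Fin.consEquiv]

/-- Sorting an injective tuple: every injective tuple is a permutation of a strictly decreasing one. -/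
theorem exists_strictAnti_comp_perm {n : ℕ} {k : Fin n → ℕ} (hk : Function.Injective k) :
    ∃ (m : Fin n → ℕ) (τ : Equiv.Perm (Fin n)), StrictAnti m ∧ m ∘ τ = k := by
  let σ := Tuple.sort (OrderDual.toDual ∘ k)
  have hanti : Antitone (k ∘ σ) := Tuple.monotone_sort (OrderDual.toDual ∘ k)
  refine ⟨k ∘ σ, σ⁻¹, hanti.strictAnti_of_injective (hk.comp σ.injective), ?_⟩
  ext i
  simp

theorem injective_strictAnti_comp_perm (n : ℕ) :
    Function.Injective
      (fun p : {k : Fin n → ℕ // StrictAnti k} × Equiv.Perm (Fin n) => p.1.1 ∘ p.2) := by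
  rintro ⟨⟨k, hk⟩, τ⟩ ⟨⟨m, hm⟩, ρ⟩ h
  simp only at h
  have hrange : Set.range k = Set.range m := by
    rw [← τ.surjective.range_comp k, h, ρ.surjective.range_comp m]
  have hkm : k = m := by
    have := (hk.dual_right.range_inj hm.dual_right).1 (by
      rw [Set.range_comp, Set.range_comp, hrange])
    exact this
  subst hkm
  have : τ = ρ := Equiv.ext fun i => hk.injective (congrFun h i)
  rw [this]

/-- An infinite Cauchy–Binet formula for matrices whose entries are power series
in the products `a j * x i`. -/
theorem hasSum_det_powerSeries {n : ℕ} {a x : Fin n → ℝ} {c : ℕ → ℝ}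
    {g : Fin n → Fin n → ℝ}
    (hg : ∀ i j, HasSum (fun m : ℕ => c m * (a j * x i) ^ m) (g i j)) :
    HasSum
      (fun k : {k : Fin n → ℕ // StrictAnti k} =>
        (∏ l, c (k.1 l)) * (Matrix.of fun i j : Fin n => (a i) ^ (k.1 j)).det *
          (Matrix.of fun i j : Fin n => (x i) ^ (k.1 j)).det)
      (Matrix.of g).det := by
  have hall : HasSum (fun k : Fin n → ℕ => (∏ i, c (k i)) * (∏ i, a i ^ k i) *
      (Matrix.of fun i j : Fin n => (x i) ^ (k j)).det) (Matrix.of g).det := by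
    simp only [Matrix.det_apply', Finset.mul_sum, Matrix.of_apply]
    refine hasSum_sum fun σ _ => ?_
    refine ((hasSum_prod_pi_real fun i => hg (σ i) i).mul_left _).congr_fun fun k => ?_
    simp only [mul_pow, Finset.prod_mul_distrib]
    ring
  rw [← (injective_strictAnti_comp_perm n).hasSum_iff] at hall
  · refine (hall.prod_fiberwise fun k => hasSum_fintype _).congr_fun fun k => ?_
    have hx : ∀ τ : Equiv.Perm (Fin n),
        (Matrix.of fun i j : Fin n => x i ^ k.1 (τ j)).det =
          (Equiv.Perm.sign τ : ℤ) * (Matrix.of fun i j : Fin n => x i ^ k.1 j).det := fun τ =>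
      Matrix.det_permute' τ (Matrix.of fun i j : Fin n => x i ^ k.1 j)
    have ha : (Matrix.of fun i j : Fin n => a i ^ k.1 j).det =
        ∑ τ : Equiv.Perm (Fin n), ((Equiv.Perm.sign τ : ℤ) : ℝ) * ∏ i, a i ^ k.1 (τ i) := by
      rw [← Matrix.det_transpose, Matrix.det_apply']
      rfl
    simp only [Function.comp_apply, hx, ha, Finset.mul_sum, Finset.sum_mul]
    refine Finset.sum_congr rfl fun τ _ => ?_
    rw [Equiv.prod_comp τ fun i => c (k.1 i)]
    ring
  · intro k hk
    have hnot : ¬ Function.Injective k := fun hinj => by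
      obtain ⟨m, τ, hm, rfl⟩ := exists_strictAnti_comp_perm hinj
      exact hk ⟨(⟨m, hm⟩, τ), rfl⟩
    simp only [Function.Injective, not_forall] at hnot
    obtain ⟨i, j, hij, hne⟩ := hnot
    rw [Matrix.det_zero_of_column_eq hne (fun l => by simp [hij]), mul_zero]

theorem hasSum_neg_one_div_mul_pow_log {y : ℝ} (hy : |y| < 1) :
    HasSum (fun m : ℕ => -(1 / (m : ℝ)) * y ^ m) (Real.log (1 - y)) := by
  rw [← hasSum_nat_add_iff' 1]
  simpa [div_eq_inv_mul] using (Real.hasSum_pow_div_log_of_abs_lt_one hy).neg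

theorem cauchy_type_identity_log
    (n : ℕ) (hn : 1 ≤ n) (a x : Fin n → ℝ)
    (hax : ∀ i j : Fin n, |a j * x i| < 1) :
    HasSum
      (fun k : {k : Fin n → ℕ // StrictAnti k ∧ ∀ l : Fin n, 1 ≤ k l} =>
        (-1 : ℝ) ^ n * (∏ l : Fin n, (1 / (k.1 l : ℝ))) *
          (Matrix.of fun i j : Fin n => (a i) ^ (k.1 j)).det *
          (Matrix.of fun i j : Fin n => (x i) ^ (k.1 j)).det)
      (Matrix.of fun i j : Fin n => Real.log (1 - a j * x i)).det := by
  have h := hasSum_det_powerSeries fun i j => hasSum_neg_one_div_mul_pow_log (hax i j)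
  let e : {k : Fin n → ℕ // StrictAnti k ∧ ∀ l : Fin n, 1 ≤ k l} →
      {k : Fin n → ℕ // StrictAnti k} := fun k => ⟨k.1, k.2.1⟩
  have he : Function.Injective e := fun k m hkm => Subtype.ext (Subtype.mk.inj hkm)
  rw [← he.hasSum_iff] at h
  · refine h.congr_fun fun k => ?_
    simp [e, Finset.prod_neg]
  · intro k hk
    have hzero : ∃ l, k.1 l = 0 := by
      by_contra! hpos
      exact hk ⟨⟨k.1, k.2, fun l => Nat.one_le_iff_ne_zero.2 (hpos l)⟩, rfl⟩
    obtain ⟨l, hl⟩ := hzero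
    rw [Finset.prod_eq_zero (Finset.mem_univ l) (by simp [hl]), zero_mul, zero_mul]
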